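/- Let p be a prime with p ≡ 1 (mod 3), write p = A² + 3B² with integers A, B and A ≡ 1 (mod 3), and let a be an integer with p ∤ a. Then a is a cubic residue modulo p (i.e., x³ ≡ a (mod p) is solvable) if and only if V_p(x² + 2a/x) = (2p − 1 + 2A)/3. -/

import Mathlib

/-!
Let `χ` be the quadratic character modulo `p` and `S(a) = ∑ r, χ (1 + a r³)`. If `x` and `y` are
distinct roots of `x³ + c = b x`, then `x y (x + y) = c` and the third root is `-x - y`. Comparing,
for each `b`, the number of roots with the number of such pairs (a double root `x` contributing the
pair `(x, x)`) yields `3 V + N = 3 (p - 1)`, where `N` is the number of solutions of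
`x y (x + y) = c`. For `c = 2 a` a rational substitution turns this curve into `w² = 1 + a r³`,
`r ≠ 0`, whence `N = p - 2 + S(a)` and `3 V = 2 p - 1 - S(a)`.

The sum `S(a)` depends only on the class of `a ≠ 0` modulo cubes. Orthogonality gives the first two
moments of its values `T = S(1)`, `U`, `W` on the three classes: `T + U + W = 0` and
`T² + U² + W² = 6 p`. As `T` is even and `p` is odd, neither `U` nor `W` can equal `T`. Writing
`T = 2 C`, the moments become `(U + C)² = 3 (p - C²)`, so `p = C² + 3 D²`; by uniqueness of such
representations and `T ≡ 1 (mod 3)`, we get `T = -2 A`.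
-/

open Finset

section CyclicSums

variable {M : Type*} [AddCommMonoid M]

theorem sum_range_mul_of_periodic {f : ℕ → M} {n : ℕ} (hf : Function.Periodic f n) (m : ℕ) :
    ∑ k ∈ range (n * m), f k = m • ∑ k ∈ range n, f k := by
  induction m with
  | zero => simp
  | succ m ih =>
    have hshift (k : ℕ) : f (n * m + k) = f k := by
      simpa [add_comm, mul_comm] using hf.nat_mul m k
    simp only [mul_add_one, sum_range_add, ih, hshift, succ_nsmul]

theorem sum_eq_sum_range_pow {G : Type*} [Group G] [Fintype G] {g : G}
    (hg : ∀ x, x ∈ Subgroup.zpowers g) (f : G → M) :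
    ∑ x, f x = ∑ k ∈ range (Fintype.card G), f (g ^ k) := by
  classical
  have hord : orderOf g = Fintype.card G := by
    rw [orderOf_eq_card_of_forall_mem_zpowers hg, Nat.card_eq_fintype_card]
  rw [← IsCyclic.image_range_orderOf hg, sum_image, hord]
  simpa [Set.InjOn] using pow_injOn_Iio_orderOf (x := g)

theorem sum_eq_nsmul_sum_range_pow {G : Type*} [Group G] [Fintype G] {g : G}
    (hg : ∀ x, x ∈ Subgroup.zpowers g) {n : ℕ} (hn : n ∣ Fintype.card G) {f : G → M}
    (hf : ∀ x, f (x * g ^ n) = f x) :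
    ∑ x, f x = (Fintype.card G / n) • ∑ k ∈ range n, f (g ^ k) := by
  have hperiodic : Function.Periodic (fun k : ℕ ↦ f (g ^ k)) n := fun k ↦ by
    simp only [pow_add, hf]
  rw [sum_eq_sum_range_pow hg, ← sum_range_mul_of_periodic hperiodic, Nat.mul_div_cancel' hn]

end CyclicSums

theorem sum_eq_apply_zero_add_sum_units {G₀ M : Type*} [GroupWithZero G₀] [Fintype G₀]
    [DecidableEq G₀] [AddCommMonoid M] (f : G₀ → M) : ∑ x, f x = f 0 + ∑ u : G₀ˣ, f u := by
  rw [Fintype.sum_eq_add_sum_subtype_ne f 0, ← unitsEquivNeZero.sum_comp]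
  rfl

section PowerFibers

variable {F : Type*} [Field F] [Fintype F] {n : ℕ}

theorem pos_of_dvd_card_sub_one (hn : n ∣ Fintype.card F - 1) : 0 < n :=
  Nat.pos_of_dvd_of_pos hn (Nat.sub_pos_of_lt Fintype.one_lt_card)

theorem exists_isPrimitiveRoot_of_dvd_card_sub_one (hn : n ∣ Fintype.card F - 1) :
    ∃ ζ : F, IsPrimitiveRoot ζ n := by
  obtain ⟨g, hg⟩ := IsCyclic.exists_ofOrder_eq_natCard (α := Fˣ)
  have hcard : orderOf g = (Fintype.card F - 1) / n * n := by
    classical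
    rw [hg, Nat.card_eq_fintype_card, Fintype.card_units, Nat.div_mul_cancel hn]
  exact ⟨_, ((IsPrimitiveRoot.orderOf g).pow (orderOf_pos g) hcard).map_of_injective
    (f := Units.coeHom F) Units.val_injective⟩

theorem natCast_ne_zero_of_dvd_card_sub_one (hn : n ∣ Fintype.card F - 1) : (n : F) ≠ 0 := by
  intro h0
  obtain ⟨k, hk⟩ := hn
  have hcast : (1 : F) + n * k = 0 := by
    rw [← FiniteField.cast_card_eq_zero F, ← Nat.add_sub_of_le Fintype.card_pos, hk]
    push_cast
    rfl
  simp [h0] at hcast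

variable [DecidableEq F]

theorem card_filter_pow_eq_pow (hn : n ∣ Fintype.card F - 1) {x : F} (hx : x ≠ 0) :
    #{y | y ^ n = x ^ n} = n := by
  obtain ⟨ζ, hζ⟩ := exists_isPrimitiveRoot_of_dvd_card_sub_one hn
  have hroots : ({y | y ^ n = x ^ n} : Finset F) = (Polynomial.nthRoots n (x ^ n)).toFinset := by
    ext y
    simp [Polynomial.mem_nthRoots (pos_of_dvd_card_sub_one hn)]
  rw [hroots, Multiset.toFinset_card_of_nodup (hζ.nthRoots_nodup (pow_ne_zero n hx)),
    hζ.card_nthRoots, if_pos ⟨x, rfl⟩]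

theorem dvd_card_filter_pow_eq (hn : n ∣ Fintype.card F - 1) {y : F} (hy : y ≠ 0) :
    n ∣ #{x | x ^ n = y} := by
  by_cases hroot : ∃ x, x ^ n = y
  · obtain ⟨x, rfl⟩ := hroot
    have hx : x ≠ 0 := (pow_ne_zero_iff (pos_of_dvd_card_sub_one hn).ne').mp hy
    rw [card_filter_pow_eq_pow hn hx]
  · rw [filter_false_of_mem fun x _ hx ↦ hroot ⟨x, hx⟩, card_empty]
    exact dvd_zero n

theorem sum_card_filter_pow_eq_pow (hn : n ∣ Fintype.card F - 1) :
    ∑ x : F, #{y | y ^ n = x ^ n} = 1 + n * (Fintype.card F - 1) := by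
  have hn0 := (pos_of_dvd_card_sub_one hn).ne'
  rw [sum_eq_apply_zero_add_sum_units,
    sum_congr rfl fun u _ ↦ card_filter_pow_eq_pow hn (Units.ne_zero u)]
  simp [hn0, pow_eq_zero_iff, filter_eq', Fintype.card_units, mul_comm]

end PowerFibers

theorem sum_comp_pow_modEq {F : Type*} [Field F] [Fintype F] {n : ℕ}
    (hn : n ∣ Fintype.card F - 1) (f : F → ℤ) : ∑ x, f (x ^ n) ≡ f 0 [ZMOD n] := by
  classical
  have hn0 := (pos_of_dvd_card_sub_one hn).ne'
  have hfiber : ∑ x, f (x ^ n) = ∑ y, #{x : F | x ^ n = y} * f y := by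
    rw [← sum_fiberwise univ (fun x : F ↦ x ^ n)]
    refine sum_congr rfl fun y _ ↦ ?_
    rw [sum_congr rfl fun x hx ↦ congrArg f (mem_filter.mp hx).2, sum_const, nsmul_eq_mul]
  have hzero : #{x : F | x ^ n = 0} = 1 :=
    card_eq_one.mpr ⟨0, by ext; simp [hn0]⟩
  rw [hfiber, sum_eq_apply_zero_add_sum_units, hzero, Nat.cast_one, one_mul]
  refine (Int.modEq_iff_add_fac.mpr ?_).symm
  obtain ⟨k, hk⟩ := dvd_sum fun (u : Fˣ) (_ : u ∈ univ) ↦ dvd_mul_of_dvd_left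
    (Int.natCast_dvd_natCast.mpr (dvd_card_filter_pow_eq hn u.ne_zero)) (f u)
  exact ⟨k, by rw [hk]⟩

section QuadraticCharSum

variable {F : Type*} [Field F] [Fintype F] {n : ℕ}

theorem sum_comp_add_mul {M : Type*} [AddCommMonoid M] (f : F → M) (d : F) {c : F} (hc : c ≠ 0) :
    ∑ x, f (d + x * c) = ∑ x, f x :=
  ((Equiv.mulRight₀ c hc).trans (Equiv.addLeft d)).sum_comp f

variable [DecidableEq F]

theorem quadraticChar_pow_of_odd (hn : Odd n) (x : F) :
    quadraticChar F (x ^ n) = quadraticChar F x := by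
  rw [map_pow, ← MulChar.pow_apply' _ hn.pos.ne', (quadraticChar_isQuadratic F).pow_odd hn]

theorem sum_quadraticChar_one_add_mul (hF : ringChar F ≠ 2) (u : F) :
    ∑ a, quadraticChar F (1 + a * u) = if u = 0 then (Fintype.card F : ℤ) else 0 := by
  split_ifs with hu
  · simp [hu]
  · rw [sum_comp_add_mul (quadraticChar F) 1 hu, quadraticChar_sum_zero hF]

theorem sum_quadraticChar_one_add_mul_sq {u : F} (hu : u ≠ 0) :
    ∑ a, quadraticChar F (1 + a * u) ^ 2 = Fintype.card F - 1 := by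
  rw [sum_comp_add_mul (quadraticChar F · ^ 2) 1 hu, sum_eq_apply_zero_add_sum_units,
    sum_congr rfl fun (x : Fˣ) _ ↦ quadraticChar_sq_one x.ne_zero]
  simp [Fintype.card_units, Nat.cast_sub Fintype.card_pos]

theorem sum_quadraticChar_mul_quadraticChar_one_sub (hF : ringChar F ≠ 2) :
    ∑ x, quadraticChar F x * quadraticChar F (1 - x) = -quadraticChar F (-1) := by
  have h := jacobiSum_nontrivial_inv (quadraticChar_ne_one hF)
  rwa [(quadraticChar_isQuadratic F).inv] at h

theorem sum_quadraticChar_one_add_mul_mul_of_ne (hF : ringChar F ≠ 2) {u v : F} (huv : u ≠ v) :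
    ∑ a, quadraticChar F (1 + a * u) * quadraticChar F (1 + a * v) = -quadraticChar F (u * v) := by
  rcases eq_or_ne u 0 with rfl | hu
  · simp only [mul_zero, add_zero, map_one, one_mul, zero_mul, quadraticChar_zero, neg_zero]
    rw [sum_quadraticChar_one_add_mul hF, if_neg huv.symm]
  rcases eq_or_ne v 0 with rfl | hv
  · simp only [mul_zero, add_zero, map_one, mul_one, quadraticChar_zero, neg_zero]
    rw [sum_quadraticChar_one_add_mul hF, if_neg huv]
  have hvu : v - u ≠ 0 := sub_ne_zero.mpr huv.symm
  -- The substitution `1 + a u = ((v - u) / v) x` turns `1 + a v` into `((u - v) / u) (1 - x)`.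
  rw [← sum_comp_add_mul _ (-u⁻¹) (c := (v - u) / (u * v)) (by simp [*])]
  have hterm (x : F) : quadraticChar F (1 + (-u⁻¹ + x * ((v - u) / (u * v))) * u) *
      quadraticChar F (1 + (-u⁻¹ + x * ((v - u) / (u * v))) * v) =
        quadraticChar F (-(u * v)) * (quadraticChar F x * quadraticChar F (1 - x)) := by
    simp only [← map_mul]
    have hprod : (1 + (-u⁻¹ + x * ((v - u) / (u * v))) * u) *
        (1 + (-u⁻¹ + x * ((v - u) / (u * v))) * v) =
          -(u * v) * (x * (1 - x)) * ((v - u) / (u * v)) ^ 2 := by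
      field_simp
      ring
    rw [hprod, map_mul, quadraticChar_sq_one' (by simp [*]), mul_one]
  rw [sum_congr rfl fun x _ ↦ hterm x, ← mul_sum,
    sum_quadraticChar_mul_quadraticChar_one_sub hF, mul_neg, ← map_mul, neg_mul_neg, mul_one]

theorem sum_quadraticChar_one_add_mul_mul (hF : ringChar F ≠ 2) (u v : F) :
    ∑ a, quadraticChar F (1 + a * u) * quadraticChar F (1 + a * v) =
      (if u = v then (Fintype.card F : ℤ) else 0) - quadraticChar F (u * v) := by
  split_ifs with huv
  · subst huv
    rcases eq_or_ne u 0 with rfl | hu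
    · simp
    · simp only [← sq, sum_quadraticChar_one_add_mul_sq hu, quadraticChar_sq_one' hu]
  · rw [sum_quadraticChar_one_add_mul_mul_of_ne hF huv, zero_sub]

/-- The sum `∑ r, χ (1 + a r ^ n)` over a finite field, for `χ` its quadratic character. For
`n = 3` it determines the number of values of `x ↦ x ^ 2 + 2 * a / x` on nonzero `x`. -/
def quadraticCharSum (n : ℕ) (a : F) : ℤ :=
  ∑ r, quadraticChar F (1 + a * r ^ n)

theorem quadraticCharSum_zero_right : quadraticCharSum n (0 : F) = Fintype.card F := by
  simp [quadraticCharSum]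

theorem quadraticCharSum_mul_pow (a : F) {t : F} (ht : t ≠ 0) :
    quadraticCharSum n (a * t ^ n) = quadraticCharSum n a := by
  simp only [quadraticCharSum, mul_assoc, ← mul_pow]
  exact Equiv.sum_comp (Equiv.mulLeft₀ t ht) fun r ↦ quadraticChar F (1 + a * r ^ n)

theorem sum_quadraticCharSum (hF : ringChar F ≠ 2) (hn : n ≠ 0) :
    ∑ a : F, quadraticCharSum n a = Fintype.card F := by
  simp only [quadraticCharSum]
  rw [sum_comm]
  simp [sum_quadraticChar_one_add_mul hF, -quadraticChar_apply, pow_eq_zero_iff hn]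

theorem sum_quadraticCharSum_sq (hF : ringChar F ≠ 2) (hn : Odd n) :
    ∑ a : F, quadraticCharSum n a ^ 2 =
      Fintype.card F * ∑ r : F, (#{s | s ^ n = r ^ n} : ℤ) := by
  have hexpand (a : F) : quadraticCharSum n a ^ 2 =
      ∑ r, ∑ s, quadraticChar F (1 + a * r ^ n) * quadraticChar F (1 + a * s ^ n) := by
    rw [quadraticCharSum, sq, sum_mul_sum]
  have hcross (r s : F) :
      ∑ a, quadraticChar F (1 + a * r ^ n) * quadraticChar F (1 + a * s ^ n) =
        (if s ^ n = r ^ n then (Fintype.card F : ℤ) else 0) -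
          quadraticChar F r * quadraticChar F s := by
    simp only [sum_quadraticChar_one_add_mul_mul hF, map_mul, quadraticChar_pow_of_odd hn,
      eq_comm (a := r ^ n)]
  simp only [hexpand]
  calc ∑ a, ∑ r, ∑ s, quadraticChar F (1 + a * r ^ n) * quadraticChar F (1 + a * s ^ n)
      = ∑ r, ∑ s, ∑ a, quadraticChar F (1 + a * r ^ n) * quadraticChar F (1 + a * s ^ n) := by
        rw [sum_comm]
        exact sum_congr rfl fun r _ ↦ sum_comm
    _ = ∑ r : F, ∑ s, (if s ^ n = r ^ n then (Fintype.card F : ℤ) else 0) := by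
        simp only [hcross, sum_sub_distrib, ← mul_sum, quadraticChar_sum_zero hF, mul_zero,
          sub_zero]
    _ = Fintype.card F * ∑ r : F, (#{s | s ^ n = r ^ n} : ℤ) := by
        simp only [← sum_filter, sum_const, nsmul_eq_mul, mul_sum, mul_comm]

theorem quadraticCharSum_modEq_one (hn : n ∣ Fintype.card F - 1) (a : F) :
    quadraticCharSum n a ≡ 1 [ZMOD n] := by
  simpa [quadraticCharSum] using sum_comp_pow_modEq hn fun x ↦ quadraticChar F (1 + a * x)

theorem even_one_sub_quadraticChar_sub_ite (x : F) :
    Even (1 - quadraticChar F x - if x = 0 then 1 else 0) := by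
  rcases eq_or_ne x 0 with rfl | hx
  · simp
  · rcases quadraticChar_dichotomy hx with h | h <;> simp [h, hx, -quadraticChar_apply]

theorem even_quadraticCharSum_one (hF : ringChar F ≠ 2) (hn : n ∣ Fintype.card F - 1)
    (hodd : Odd n) : Even (quadraticCharSum n (1 : F)) := by
  have hroots : #{r : F | 1 + 1 * r ^ n = 0} = n := by
    simpa only [hodd.neg_one_pow, eq_neg_iff_add_eq_zero, one_mul, add_comm] using
      card_filter_pow_eq_pow hn (neg_ne_zero.mpr (one_ne_zero (α := F)))
  have hcount : ∑ r : F, (1 - quadraticChar F (1 + 1 * r ^ n) -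
      if 1 + 1 * r ^ n = 0 then 1 else 0) = Fintype.card F - quadraticCharSum n (1 : F) - n := by
    simp only [sum_sub_distrib, quadraticCharSum, sum_const, card_univ, hroots,
      sum_boole, nsmul_eq_mul, mul_one]
  have heven : Even ((Fintype.card F : ℤ) - quadraticCharSum n (1 : F) - n) :=
    hcount ▸ even_sum _ fun r _ ↦ even_one_sub_quadraticChar_sub_ite _
  have hcard : Odd (Fintype.card F : ℤ) := by
    rw [Int.odd_coe_nat, Nat.odd_iff]
    exact FiniteField.odd_card_of_char_ne_two hF
  have hn' : Odd (n : ℤ) := mod_cast hodd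
  grind

variable {g : Fˣ}

theorem sum_range_quadraticCharSum_pow (hF : ringChar F ≠ 2) (hn : n ∣ Fintype.card F - 1)
    (hg : ∀ x, x ∈ Subgroup.zpowers g) :
    ∑ k ∈ range n, quadraticCharSum n ((g : F) ^ k) = 0 := by
  have hn0 := (pos_of_dvd_card_sub_one hn).ne'
  have hunits := sum_eq_nsmul_sum_range_pow hg (Fintype.card_units F ▸ hn)
    (f := fun u : Fˣ ↦ quadraticCharSum n (u : F)) fun u ↦ by
      rw [Units.val_mul, Units.val_pow_eq_pow_val, quadraticCharSum_mul_pow _ g.ne_zero]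
  have htotal := sum_quadraticCharSum hF hn0
  rw [sum_eq_apply_zero_add_sum_units, quadraticCharSum_zero_right, hunits, add_eq_left,
    smul_eq_zero_iff_right (Nat.div_ne_zero_iff_of_dvd (Fintype.card_units F ▸ hn) |>.mpr
      ⟨Fintype.card_ne_zero, hn0⟩)] at htotal
  simpa only [Units.val_pow_eq_pow_val] using htotal

theorem sum_range_quadraticCharSum_pow_sq (hF : ringChar F ≠ 2) (hn : n ∣ Fintype.card F - 1)
    (hodd : Odd n) (hg : ∀ x, x ∈ Subgroup.zpowers g) :
    ∑ k ∈ range n, quadraticCharSum n ((g : F) ^ k) ^ 2 = n * (n - 1) * Fintype.card F := by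
  have hdvd : n ∣ Fintype.card Fˣ := Fintype.card_units F ▸ hn
  have hunits := sum_eq_nsmul_sum_range_pow hg hdvd
    (f := fun u : Fˣ ↦ quadraticCharSum n (u : F) ^ 2) fun u ↦ by
      rw [Units.val_mul, Units.val_pow_eq_pow_val, quadraticCharSum_mul_pow _ g.ne_zero]
  have htotal := sum_quadraticCharSum_sq hF hodd
  rw [sum_eq_apply_zero_add_sum_units, quadraticCharSum_zero_right, hunits] at htotal
  have hfibers : ∑ r : F, (#{s | s ^ n = r ^ n} : ℤ) = 1 + n * (Fintype.card F - 1) := by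
    have h := congrArg (Nat.cast (R := ℤ)) (sum_card_filter_pow_eq_pow (F := F) hn)
    push_cast [Nat.cast_sub Fintype.card_pos] at h
    exact h
  have hcard : (Fintype.card Fˣ / n : ℕ) * (n : ℤ) = Fintype.card F - 1 := by
    rw [← Nat.cast_mul, Nat.div_mul_cancel hdvd, Fintype.card_units,
      Nat.cast_sub Fintype.card_pos, Nat.cast_one]
  have hindex : ((Fintype.card Fˣ / n : ℕ) : ℤ) ≠ 0 :=
    Nat.cast_ne_zero.mpr (Nat.div_pos (Nat.le_of_dvd Fintype.card_pos hdvd) hodd.pos).ne'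
  refine mul_left_cancel₀ hindex ?_
  simp only [nsmul_eq_mul, Units.val_pow_eq_pow_val, hfibers] at htotal
  linear_combination htotal + (n - 1) * (Fintype.card F : ℤ) * -hcard

theorem sum_quadraticCharSum_three (hF : ringChar F ≠ 2) (h3 : 3 ∣ Fintype.card F - 1)
    (hg : ∀ x, x ∈ Subgroup.zpowers g) :
    quadraticCharSum 3 (1 : F) + quadraticCharSum 3 (g : F) + quadraticCharSum 3 ((g : F) ^ 2) =
      0 := by
  simpa [sum_range_succ] using sum_range_quadraticCharSum_pow hF h3 hg

theorem sum_quadraticCharSum_three_sq (hF : ringChar F ≠ 2) (h3 : 3 ∣ Fintype.card F - 1)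
    (hg : ∀ x, x ∈ Subgroup.zpowers g) :
    quadraticCharSum 3 (1 : F) ^ 2 + quadraticCharSum 3 (g : F) ^ 2 +
      quadraticCharSum 3 ((g : F) ^ 2) ^ 2 = 6 * Fintype.card F := by
  simpa [sum_range_succ] using sum_range_quadraticCharSum_pow_sq hF h3 (by decide) hg

theorem quadraticCharSum_three_pow_ne (hF : ringChar F ≠ 2) (h3 : 3 ∣ Fintype.card F - 1)
    (hg : ∀ x, x ∈ Subgroup.zpowers g) {k : ℕ} (hk : ¬3 ∣ k) :
    quadraticCharSum 3 ((g : F) ^ k) ≠ quadraticCharSum 3 (1 : F) := by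
  have hsum := sum_quadraticCharSum_three hF h3 hg
  have hsq := sum_quadraticCharSum_three_sq hF h3 hg
  obtain ⟨m, hm⟩ := even_quadraticCharSum_one hF h3 (by decide)
  have hodd : Odd (Fintype.card F : ℤ) :=
    mod_cast Nat.odd_iff.mpr (FiniteField.odd_card_of_char_ne_two hF)
  have hne_sq : (Fintype.card F : ℤ) ≠ quadraticCharSum 3 (1 : F) ^ 2 := fun h ↦ by
    rw [h, hm] at hodd
    grind
  have hreduce : quadraticCharSum 3 ((g : F) ^ k) = quadraticCharSum 3 ((g : F) ^ (k % 3)) := by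
    conv_lhs => rw [← Nat.mod_add_div k 3, pow_add, mul_comm 3, pow_mul]
    exact quadraticCharSum_mul_pow _ (pow_ne_zero _ g.ne_zero)
  rw [hreduce]
  intro heq
  refine hne_sq ?_
  obtain hk1 | hk2 : k % 3 = 1 ∨ k % 3 = 2 := by lia
  · rw [hk1, pow_one] at heq
    have hthird : quadraticCharSum 3 ((g : F) ^ 2) = -2 * quadraticCharSum 3 (1 : F) := by linarith
    rw [heq, hthird] at hsq
    linarith
  · rw [hk2] at heq
    have hthird : quadraticCharSum 3 (g : F) = -2 * quadraticCharSum 3 (1 : F) := by linarith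
    rw [heq, hthird] at hsq
    linarith

theorem quadraticCharSum_three_eq_iff (hF : ringChar F ≠ 2) (h3 : 3 ∣ Fintype.card F - 1) {a : F}
    (ha : a ≠ 0) : quadraticCharSum 3 a = quadraticCharSum 3 (1 : F) ↔ ∃ x, x ^ 3 = a := by
  constructor
  · intro heq
    obtain ⟨g, hg⟩ := IsCyclic.exists_generator (α := Fˣ)
    obtain ⟨k, hk⟩ := mem_powers_iff_mem_zpowers.mpr (hg (Units.mk0 a ha))
    replace hk : (g : F) ^ k = a := by simpa using congrArg Units.val hk
    by_contra hcube
    refine quadraticCharSum_three_pow_ne hF h3 hg (k := k) ?_ (hk ▸ heq)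
    rintro ⟨m, rfl⟩
    exact hcube ⟨(g : F) ^ m, by rw [← hk, mul_comm, pow_mul]⟩
  · rintro ⟨x, rfl⟩
    rw [← one_mul (x ^ 3), quadraticCharSum_mul_pow 1 (pow_ne_zero_iff three_ne_zero |>.mp ha)]

end QuadraticCharSum

theorem sq_eq_sq_of_prime_of_eq_sq_add_mul_sq {p m a b c d : ℤ} (hp : Prime p) (hm : 1 < m)
    (hab : p = a ^ 2 + m * b ^ 2) (hcd : p = c ^ 2 + m * d ^ 2) : a ^ 2 = c ^ 2 := by
  wlog hdvd : p ∣ c * b - a * d generalizing d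
  · have hprod : p ∣ (c * b - a * d) * (c * b + a * d) :=
      ⟨b ^ 2 - d ^ 2, by linear_combination d ^ 2 * hab - b ^ 2 * hcd⟩
    refine this (d := -d) (by simpa using hcd) ?_
    simpa using (hp.dvd_or_dvd hprod).resolve_left hdvd
  obtain ⟨k, hk⟩ := hdvd
  have hbrahmagupta : p ^ 2 = (a * c + m * b * d) ^ 2 + m * (p * k) ^ 2 := by
    rw [← hk]
    linear_combination p * hab + (a ^ 2 + m * b ^ 2) * hcd
  have hk0 : k = 0 := by
    by_contra hk0
    have hpos : 0 < p ^ 2 := by have := hp.ne_zero; positivity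
    have hmk : 1 < m * k ^ 2 := one_lt_mul_of_lt_of_le hm (Order.one_le_iff_pos.mpr (by positivity))
    nlinarith [sq_nonneg (a * c + m * b * d)]
  have hcross : c * b = a * d := by simpa [hk0, sub_eq_zero] using hk
  refine mul_right_cancel₀ hp.ne_zero ?_
  linear_combination a ^ 2 * hcd - c ^ 2 * hab - m * (a * d + c * b) * hcross

section CubicRoots

variable {F : Type*} [Field F] [Fintype F] [DecidableEq F] {b c x y : F}

/-- The solutions of `x ^ 3 + c = b * x`; for `c ≠ 0` this is the fiber of `x ↦ x ^ 2 + c / x`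
over `b`. -/
def cubicRoots (c b : F) : Finset F := {x | x ^ 3 + c = b * x}

/-- The values `b` of the map `x ↦ x ^ 2 + c / x` on nonzero `x`, provided that `c ≠ 0`. -/
def cubicValues (c : F) : Finset F := {b | (cubicRoots c b).Nonempty}

/-- The pairs `(x, y)` with `x * y * (x + y) = c`; they encode two of the three roots `x`, `y`,
`-x - y` of `x ^ 3 + c = b * x`. -/
def cubicPairs (c : F) : Finset (F × F) := {q | q.1 * q.2 * (q.1 + q.2) = c}

theorem mem_cubicRoots : x ∈ cubicRoots c b ↔ x ^ 3 + c = b * x := by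
  simp [cubicRoots]

theorem mem_cubicPairs : (x, y) ∈ cubicPairs c ↔ x * y * (x + y) = c := by
  simp [cubicPairs]

theorem ne_zero_of_mem_cubicRoots (hc : c ≠ 0) (hx : x ∈ cubicRoots c b) : x ≠ 0 := by
  rintro rfl
  simp [mem_cubicRoots, hc] at hx

theorem cubicRoots_eq_of_mem_cubicPairs (hxy : (x, y) ∈ cubicPairs c) :
    cubicRoots c (x ^ 2 + x * y + y ^ 2) = {x, y, -x - y} := by
  ext t
  rw [mem_cubicPairs] at hxy
  have hfactor : t ^ 3 + c - (x ^ 2 + x * y + y ^ 2) * t = (t - x) * (t - y) * (t - (-x - y)) := by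
    linear_combination -hxy
  rw [mem_cubicRoots, ← sub_eq_zero, hfactor]
  simp only [mul_eq_zero, sub_eq_zero, or_assoc, mem_insert, mem_singleton]

theorem mem_cubicPairs_of_mem_cubicRoots (hx : x ∈ cubicRoots c b) (hy : y ∈ cubicRoots c b)
    (hxy : x ≠ y) : (x, y) ∈ cubicPairs c := by
  rw [mem_cubicRoots] at hx hy
  rw [mem_cubicPairs]
  refine mul_left_cancel₀ (sub_ne_zero.mpr hxy) ?_
  linear_combination y * hx - x * hy

theorem eq_of_mem_cubicPairs_of_mem_cubicRoots (hc : c ≠ 0) (hxy : (x, y) ∈ cubicPairs c)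
    (hx : x ∈ cubicRoots c b) : x ^ 2 + x * y + y ^ 2 = b := by
  refine mul_right_cancel₀ (ne_zero_of_mem_cubicRoots hc hx) ?_
  rw [mem_cubicRoots] at hx
  rw [mem_cubicPairs] at hxy
  linear_combination hxy + hx

theorem filter_cubicPairs_eq (hc : c ≠ 0) (b : F) :
    {q ∈ cubicPairs c | q.1 ^ 2 + q.1 * q.2 + q.2 ^ 2 = b} =
      (cubicRoots c b).offDiag ∪
        {s ∈ cubicRoots c b | (s, s) ∈ cubicPairs c}.image fun s ↦ (s, s) := by
  ext ⟨x, y⟩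
  simp only [mem_filter, mem_union, mem_offDiag, mem_image, Prod.mk.injEq]
  constructor
  · rintro ⟨hxy, rfl⟩
    rw [cubicRoots_eq_of_mem_cubicPairs hxy]
    rcases eq_or_ne x y with rfl | hne
    · exact Or.inr ⟨x, by simp [hxy]⟩
    · simp [hne]
  · rintro (⟨hx, hy, hne⟩ | ⟨s, ⟨hs, hss⟩, rfl, rfl⟩)
    · have hxy := mem_cubicPairs_of_mem_cubicRoots hx hy hne
      exact ⟨hxy, eq_of_mem_cubicPairs_of_mem_cubicRoots hc hxy hx⟩
    · exact ⟨hss, eq_of_mem_cubicPairs_of_mem_cubicRoots hc hss hs⟩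

theorem card_filter_cubicPairs (hc : c ≠ 0) (b : F) :
    #{q ∈ cubicPairs c | q.1 ^ 2 + q.1 * q.2 + q.2 ^ 2 = b} =
      #(cubicRoots c b).offDiag + #{s ∈ cubicRoots c b | (s, s) ∈ cubicPairs c} := by
  rw [filter_cubicPairs_eq hc, card_union_of_disjoint, card_image_of_injective]
  · exact fun _ _ h ↦ (Prod.mk.inj h).1
  · rw [disjoint_left]
    rintro _ hq hq'
    obtain ⟨s, -, rfl⟩ := mem_image.mp hq'
    exact (mem_offDiag.mp hq).2.2 rfl

theorem card_cubicRoots_of_diag_mem_cubicPairs (h2 : (2 : F) ≠ 0) (h3 : (3 : F) ≠ 0) (hc : c ≠ 0)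
    {s : F} (hs : s ∈ cubicRoots c b) (hss : (s, s) ∈ cubicPairs c) :
    #(cubicRoots c b) = 2 ∧ #{s ∈ cubicRoots c b | (s, s) ∈ cubicPairs c} = 1 := by
  obtain rfl := eq_of_mem_cubicPairs_of_mem_cubicRoots hc hss hs
  have hs0 := ne_zero_of_mem_cubicRoots hc hs
  have hne : s ≠ -s - s := fun h ↦ mul_ne_zero h3 hs0 (by linear_combination h)
  have hother : (-s - s, -s - s) ∉ cubicPairs c := by
    rw [mem_cubicPairs] at hss ⊢
    intro h
    have : 2 * 3 ^ 2 * s ^ 3 = 0 := by linear_combination hss - h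
    simp_all
  rw [cubicRoots_eq_of_mem_cubicPairs hss]
  simp [filter_insert, filter_singleton, hss, hother, hne]

theorem card_cubicRoots_of_forall_notMem_cubicPairs (hc : c ≠ 0)
    (hne : (cubicRoots c b).Nonempty) (hsimple : ∀ s ∈ cubicRoots c b, (s, s) ∉ cubicPairs c) :
    #(cubicRoots c b) = 1 ∨ #(cubicRoots c b) = 3 := by
  obtain hcard | hcard := Nat.eq_or_lt_of_le (card_pos.mpr hne)
  · exact Or.inl hcard.symm
  obtain ⟨x, hx, y, hy, hxy⟩ := one_lt_card.mp hcard
  have hpair := mem_cubicPairs_of_mem_cubicRoots hx hy hxy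
  obtain rfl := eq_of_mem_cubicPairs_of_mem_cubicRoots hc hpair hx
  rw [mem_cubicPairs] at hpair
  have hxz : x ≠ -x - y := fun h ↦ hsimple x hx <| by
    rw [mem_cubicPairs, ← hpair]
    grind
  have hyz : y ≠ -x - y := fun h ↦ hsimple y hy <| by
    rw [mem_cubicPairs, ← hpair]
    grind
  rw [cubicRoots_eq_of_mem_cubicPairs (mem_cubicPairs.mpr hpair)]
  exact Or.inr (card_eq_three.mpr ⟨x, y, -x - y, hxy, hxz, hyz, rfl⟩)

theorem three_add_card_filter_cubicPairs (h2 : (2 : F) ≠ 0) (h3 : (3 : F) ≠ 0) (hc : c ≠ 0)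
    (hne : (cubicRoots c b).Nonempty) :
    3 + #{q ∈ cubicPairs c | q.1 ^ 2 + q.1 * q.2 + q.2 ^ 2 = b} = 3 * #(cubicRoots c b) := by
  rw [card_filter_cubicPairs hc, offDiag_card]
  by_cases hsimple : ∀ s ∈ cubicRoots c b, (s, s) ∉ cubicPairs c
  · rw [filter_false_of_mem hsimple]
    rcases card_cubicRoots_of_forall_notMem_cubicPairs hc hne hsimple with h | h <;> simp [h]
  · push Not at hsimple
    obtain ⟨s, hs, hss⟩ := hsimple
    obtain ⟨hroots, hdouble⟩ := card_cubicRoots_of_diag_mem_cubicPairs h2 h3 hc hs hss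
    simp [hroots, hdouble]

theorem sum_card_cubicRoots (hc : c ≠ 0) : ∑ b : F, #(cubicRoots c b) = Fintype.card F - 1 := by
  have hfiber (b : F) : cubicRoots c b = {x ∈ univ.erase (0 : F) | x ^ 2 + c / x = b} := by
    ext x
    rcases eq_or_ne x 0 with rfl | hx
    · simp [mem_cubicRoots, hc]
    · have hdiv : x ^ 2 + c / x = b ↔ x ^ 3 + c = b * x := by
        rw [← mul_left_inj' hx, add_mul, div_mul_cancel₀ c hx, ← pow_succ]
      simp [mem_cubicRoots, hx, hdiv]
  simp only [hfiber]
  rw [sum_card_fiberwise_eq_card_filter]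
  simp

theorem three_mul_card_cubicValues_add (h2 : (2 : F) ≠ 0) (h3 : (3 : F) ≠ 0) (hc : c ≠ 0) :
    3 * #(cubicValues c) + #(cubicPairs c) = 3 * (Fintype.card F - 1) := by
  have hvalues : 3 * #(cubicValues c) = ∑ b : F, if (cubicRoots c b).Nonempty then 3 else 0 := by
    rw [cubicValues, ← sum_filter, sum_const, smul_eq_mul, mul_comm]
  rw [← sum_card_cubicRoots hc, hvalues, mul_sum,
    card_eq_sum_card_fiberwise (f := fun q ↦ q.1 ^ 2 + q.1 * q.2 + q.2 ^ 2) (t := univ)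
      (by simp), ← sum_add_distrib]
  refine sum_congr rfl fun b _ ↦ ?_
  split_ifs with hne
  · exact three_add_card_filter_cubicPairs h2 h3 hc hne
  · simp [filter_cubicPairs_eq hc, not_nonempty_iff_eq_empty.mp hne]

theorem card_filter_sq_eq (hF : ringChar F ≠ 2) (a : F) :
    (#{w : F | w ^ 2 = a} : ℤ) = quadraticChar F a + 1 := by
  have h := quadraticChar_card_sqrts hF a
  rwa [Set.toFinset_ofPred] at h

theorem card_cubicPairs_two_mul (h2 : (2 : F) ≠ 0) {a : F} (ha : a ≠ 0) :
    #(cubicPairs (2 * a)) = ∑ r ∈ univ.erase (0 : F), #{w : F | w ^ 2 = 1 + a * r ^ 3} := by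
  -- For `r = -2 / (x + y)` and `w = (y - x) / (x + y)` we have `1 - w ^ 2 = x y r ^ 2`, so that
  -- `x y (x + y) = 2 a` becomes `w ^ 2 = 1 + a r ^ 3`.
  rw [← card_sigma]
  have hsum {x y : F} (h : x * y * (x + y) = 2 * a) : x + y ≠ 0 := by
    intro h0
    simp_all
  refine card_bij' (fun q _ ↦ ⟨-2 / (q.1 + q.2), (q.2 - q.1) / (q.1 + q.2)⟩)
    (fun s _ ↦ ((s.2 - 1) / s.1, -(s.2 + 1) / s.1)) ?_ ?_ ?_ ?_
  · rintro ⟨x, y⟩ hxy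
    rw [mem_cubicPairs] at hxy
    have hxy0 := hsum hxy
    simp only [mem_sigma, mem_erase, mem_filter_univ, mem_univ, and_true]
    refine ⟨div_ne_zero (neg_ne_zero.mpr h2) hxy0, ?_⟩
    field_simp
    linear_combination -4 * hxy
  · rintro ⟨r, w⟩ hrw
    simp only [mem_sigma, mem_erase, mem_filter_univ, mem_univ, and_true] at hrw
    obtain ⟨hr, hw⟩ := hrw
    rw [mem_cubicPairs]
    field_simp
    linear_combination 2 * hw
  · rintro ⟨x, y⟩ hxy
    have hxy0 := hsum (mem_cubicPairs.mp hxy)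
    ext <;> field_simp <;> ring
  · rintro ⟨r, w⟩ hrw
    have hr : r ≠ 0 := ne_of_mem_erase (mem_sigma.mp hrw).1
    have hadd : (w - 1) / r + -(w + 1) / r = -2 / r := by ring
    have hsub : -(w + 1) / r - (w - 1) / r = -2 * w / r := by ring
    simp only [hadd, hsub]
    have hneg : (-2 : F) ≠ 0 := neg_ne_zero.mpr h2
    refine Sigma.ext ?_ (heq_of_eq ?_) <;> field_simp [hneg]

theorem card_cubicPairs_two_mul_eq (hF : ringChar F ≠ 2) {a : F} (ha : a ≠ 0) :
    (#(cubicPairs (2 * a)) : ℤ) = Fintype.card F - 2 + quadraticCharSum 3 a := by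
  have hsum : ∑ r ∈ univ.erase (0 : F), quadraticChar F (1 + a * r ^ 3) =
      quadraticCharSum 3 a - 1 := by
    rw [sum_erase_eq_sub (mem_univ 0), quadraticCharSum]
    simp
  rw [card_cubicPairs_two_mul (Ring.two_ne_zero hF) ha]
  push_cast [card_filter_sq_eq hF, sum_add_distrib, hsum, sum_const, card_erase_of_mem,
    card_univ, mem_univ, nsmul_eq_mul, Nat.cast_sub Fintype.card_pos]
  ring

theorem three_mul_card_cubicValues_two_mul (hF : ringChar F ≠ 2) (h3 : (3 : F) ≠ 0) {a : F}
    (ha : a ≠ 0) :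
    3 * (#(cubicValues (2 * a)) : ℤ) = 2 * Fintype.card F - 1 - quadraticCharSum 3 a := by
  have h2 := Ring.two_ne_zero hF
  have hcount := congrArg (Nat.cast (R := ℤ))
    (three_mul_card_cubicValues_add h2 h3 (mul_ne_zero h2 ha))
  push_cast [card_cubicPairs_two_mul_eq hF ha, Nat.cast_sub Fintype.card_pos] at hcount
  linarith

end CubicRoots

theorem ringChar_zmod_ne_two {p : ℕ} (hp : p % 3 = 1) : ringChar (ZMod p) ≠ 2 := by
  rw [ZMod.ringChar_zmod_n]
  lia

theorem three_dvd_card_sub_one {p : ℕ} [NeZero p] (hp : p % 3 = 1) :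
    3 ∣ Fintype.card (ZMod p) - 1 := by
  rw [ZMod.card]
  lia

theorem exists_intCast_pow_modEq_iff (p n : ℕ) (a : ℤ) :
    (∃ x : ℤ, x ^ n ≡ a [ZMOD (p : ℤ)]) ↔ ∃ x : ZMod p, x ^ n = a := by
  simp [← ZMod.intCast_eq_intCast_iff, (ZMod.intCast_surjective (n := p)).exists]

section Prime

variable {p : ℕ} [Fact p.Prime]

theorem quadraticCharSum_three_one_eq (hp : p % 3 = 1) {A B : ℤ}
    (hAB : (p : ℤ) = A ^ 2 + 3 * B ^ 2) (hA : A % 3 = 1) :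
    quadraticCharSum 3 (1 : ZMod p) = -2 * A := by
  have hF := ringChar_zmod_ne_two hp
  have h3 := three_dvd_card_sub_one hp
  obtain ⟨g, hg⟩ := IsCyclic.exists_generator (α := (ZMod p)ˣ)
  have hsum := sum_quadraticCharSum_three hF h3 hg
  have hsq := sum_quadraticCharSum_three_sq hF h3 hg
  have hmod : _ ≡ 1 [ZMOD 3] := quadraticCharSum_modEq_one h3 (1 : ZMod p)
  obtain ⟨C, hC⟩ := even_quadraticCharSum_one hF h3 (by decide)
  rw [hC] at hsum hsq hmod ⊢
  rw [ZMod.card, eq_neg_of_add_eq_zero_right hsum] at hsq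
  have hnorm : (quadraticCharSum 3 (g : ZMod p) + C) ^ 2 = 3 * (p - C ^ 2) := by
    linarith
  obtain ⟨D, hD⟩ := Int.prime_three.dvd_of_dvd_pow ⟨_, hnorm⟩
  have hCD : (p : ℤ) = C ^ 2 + 3 * D ^ 2 := by
    rw [hD] at hnorm
    linarith
  have hsq_eq := sq_eq_sq_of_prime_of_eq_sq_add_mul_sq (Nat.prime_iff_prime_int.mp Fact.out)
    (by norm_num) hAB hCD
  rcases sq_eq_sq_iff_eq_or_eq_neg.mp hsq_eq with h | h <;> grind [Int.ModEq]

theorem natCast_mem_cubicValues_iff {c : ℤ} (hc : (c : ZMod p) ≠ 0) (b : ℕ) :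
    (b : ZMod p) ∈ cubicValues (c : ZMod p) ↔
      ∃ x ∈ Icc 1 (p - 1), (x : ℤ) ^ 3 + c ≡ (b : ℤ) * (x : ℤ) [ZMOD (p : ℤ)] := by
  have hroot (x : ℕ) : (x : ℤ) ^ 3 + c ≡ (b : ℤ) * (x : ℤ) [ZMOD (p : ℤ)] ↔
      (x : ZMod p) ∈ cubicRoots (c : ZMod p) b := by
    rw [← ZMod.intCast_eq_intCast_iff, mem_cubicRoots]
    push_cast
    rfl
  simp only [hroot, cubicValues, mem_filter_univ]
  constructor
  · rintro ⟨x, hx⟩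
    have hx0 := (ZMod.val_ne_zero x).mpr (ne_zero_of_mem_cubicRoots hc hx)
    exact ⟨x.val, by have := x.val_lt; grind, by rwa [ZMod.natCast_zmod_val]⟩
  · rintro ⟨x, -, hx⟩
    exact ⟨x, hx⟩

theorem card_filter_range_eq_card_cubicValues {c : ℤ} (hc : (c : ZMod p) ≠ 0) :
    #{b ∈ range p |
      ∃ x ∈ Icc 1 (p - 1), (x : ℤ) ^ 3 + c ≡ ((b : ℕ) : ℤ) * (x : ℤ) [ZMOD (p : ℤ)]} =
        #(cubicValues (c : ZMod p)) := by
  simp only [← natCast_mem_cubicValues_iff hc]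
  refine card_bij' (fun b _ ↦ (b : ZMod p)) (fun b _ ↦ b.val) ?_ ?_ ?_ ?_
  · exact fun b hb ↦ (mem_filter.mp hb).2
  · exact fun b hb ↦ by simpa [ZMod.val_lt] using hb
  · exact fun b hb ↦ ZMod.val_cast_of_lt (mem_range.mp (mem_filter.mp hb).1)
  · exact fun b _ ↦ ZMod.natCast_zmod_val b

end Prime

theorem stmt_3 (p : ℕ) (hp : p.Prime) (hp1 : p % 3 = 1)
    (A B : ℤ) (hpAB : (p : ℤ) = A ^ 2 + 3 * B ^ 2) (hA : A % 3 = 1)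
    (a : ℤ) (ha : ¬ (p : ℤ) ∣ a) :
    (∃ x : ℤ, x ^ 3 ≡ a [ZMOD (p : ℤ)]) ↔
      3 * (((Finset.range p).filter (fun b : ℕ =>
      ∃ x ∈ Finset.Icc 1 (p - 1),
        (x : ℤ) ^ 3 + (2 * a) ≡ (b : ℤ) * (x : ℤ) [ZMOD (p : ℤ)])).card : ℤ) = 2 * (p : ℤ) - 1 + 2 * A := by
  have : Fact p.Prime := ⟨hp⟩
  have ha0 : (a : ZMod p) ≠ 0 := mt (ZMod.intCast_zmod_eq_zero_iff_dvd a p).mp ha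
  have hF := ringChar_zmod_ne_two hp1
  have h2a : ((2 * a : ℤ) : ZMod p) ≠ 0 := by
    simpa [Ring.two_ne_zero hF] using ha0
  have h3 : (3 : ZMod p) ≠ 0 := natCast_ne_zero_of_dvd_card_sub_one (three_dvd_card_sub_one hp1)
  have hcount := three_mul_card_cubicValues_two_mul hF h3 ha0
  rw [ZMod.card] at hcount
  rw [exists_intCast_pow_modEq_iff, card_filter_range_eq_card_cubicValues h2a,
    ← quadraticCharSum_three_eq_iff hF (three_dvd_card_sub_one hp1) ha0,
    quadraticCharSum_three_one_eq hp1 hpAB hA]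
  push_cast
  constructor <;> intro h <;> linarith
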